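/- Let J be a Borel-fixed monomial ideal of k[x_0,…,x_n], let e be an integer with 1 ≤ e ≤ n, and suppose T·x_{n−1} is a minimal generator of J of degree 3 where T is a degree-2 monomial with max(T) ≤ e−1. Then for every i with e−1 ≤ i ≤ n−1, the monomial T·x_i is a minimal generator of J of degree 3 with max(T·x_i) = i, i.e. T·x_i ∈ ℳ_i(3, J). -/

import Mathlib

/-!
The monomial `T` itself is not in `J`, because `T * x_{n-1}` is a minimal generator. The Borel
property applied to `T * x_{n-1}` gives `T * x_i ∈ J` for `i ≤ n - 1`. For minimality, let `x_ℓ`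
divide `T * x_i` and suppose `T * x_i / x_ℓ ∈ J`. If `x_ℓ ∣ T`, then `ℓ ≤ max T ≤ e - 1 ≤ i`, so the
Borel move from `x_i` to `x_ℓ` turns `(T / x_ℓ) * x_i ∈ J` into `T ∈ J`; otherwise `ℓ = i` and the
quotient is `T` already. Both contradict `T ∉ J`.
-/

/-- The exponent vector of a monomial in the `N` variables `x_0, …, x_{N-1}`. -/
abbrev Mon (N : ℕ) : Type := Fin N → ℕ

/-- The total degree of a monomial. -/
def mdeg {N : ℕ} (m : Mon N) : ℕ := ∑ i, m i

/-- `mmax m` is the largest index `i` such that `x_i` divides `m` (`0` if `m = 1`). -/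
def mmax {N : ℕ} (m : Mon N) : ℕ :=
  (Finset.univ.filter fun i : Fin N => 0 < m i).sup fun i => (i : ℕ)

/-- `J` is the set of monomials of a monomial ideal: membership is stable under
multiplication by arbitrary monomials. -/
def IsMonomialIdeal {N : ℕ} (J : Set (Mon N)) : Prop :=
  ∀ m ∈ J, ∀ t : Mon N, m + t ∈ J

/-- Borel-fixed property (characteristic-zero combinatorial definition): if `m ∈ J`,
`x_i ∣ m` and `j ≤ i` then `(m / x_i) * x_j ∈ J`. -/
def IsBorelFixed {N : ℕ} (J : Set (Mon N)) : Prop :=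
  ∀ (m : Mon N) (i j : Fin N), j ≤ i → m + Pi.single i 1 ∈ J → m + Pi.single j 1 ∈ J

/-- `m` is a minimal generator of the monomial ideal `J`. -/
def IsMinGen {N : ℕ} (J : Set (Mon N)) (m : Mon N) : Prop :=
  m ∈ J ∧ ∀ ℓ : Fin N, 0 < m ℓ → m - Pi.single ℓ 1 ∉ J

/-- `𝒢(J)_d`: the set of minimal generators of `J` of degree `d`. -/
def minGens {N : ℕ} (J : Set (Mon N)) (d : ℕ) : Set (Mon N) :=
  {m | IsMinGen J m ∧ mdeg m = d}

/-- `ℳ_i(d, J)`: the set of minimal generators of `J` of degree `d` with `max = i`. -/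
def Mset {N : ℕ} (J : Set (Mon N)) (d i : ℕ) : Set (Mon N) :=
  {m | IsMinGen J m ∧ mdeg m = d ∧ mmax m = i}

/-- `J ⊆ k[x_0, …, x_K]` is saturated with respect to the last variable `x_K`. -/
def IsSatLast {K : ℕ} (J : Set (Mon (K + 1))) : Prop :=
  ∀ m : Mon (K + 1), m + Pi.single (Fin.last K) 1 ∈ J → m ∈ J

/-- The section ideal `J′ ⊆ k[x_0, …, x_{K-1}]` of `J ⊆ k[x_0, …, x_K]`, whose
monomials are the monomials `m` in `x_0, …, x_{K-1}` with `m * x_{K-1} ^ c ∈ J`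
for some `c ≥ 0`. -/
def sectIdeal {K : ℕ} (J : Set (Mon (K + 1))) : Set (Mon K) :=
  {m | ∃ c : ℕ,
    (Fin.snoc m 0 : Mon (K + 1)) + Pi.single (⟨K - 1, by omega⟩ : Fin (K + 1)) c ∈ J}

/-- Auxiliary form of the section ideal, allowing a degenerate number of variables. -/
def sectPred : {K : ℕ} → Set (Mon K) → Set (Mon (K - 1))
  | 0, J => J
  | _ + 1, J => sectIdeal J

/-- The iterated section ideal `J^(m) ⊆ k[x_0, …, x_{N-1-m}]`. -/
def iterSect {N : ℕ} (J : Set (Mon N)) : (m : ℕ) → Set (Mon (N - m))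
  | 0 => J
  | m + 1 => sectPred (iterSect J m)

theorem le_mmax {N : ℕ} {m : Mon N} {i : Fin N} (h : 0 < m i) : (i : ℕ) ≤ mmax m :=
  Finset.le_sup (f := fun i : Fin N => (i : ℕ)) (by simpa using h)

theorem mdeg_add_single {N : ℕ} (m : Mon N) (i : Fin N) :
    mdeg (m + Pi.single i 1) = mdeg m + 1 := by
  simp [mdeg, Finset.sum_add_distrib]

theorem mmax_add_single {N : ℕ} {m : Mon N} {i : Fin N} (h : mmax m ≤ (i : ℕ)) :
    mmax (m + Pi.single i 1) = (i : ℕ) := by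
  refine le_antisymm (Finset.sup_le fun l hl => ?_) (le_mmax (by simp))
  by_cases hli : l = i
  · rw [hli]
  · have hl' : 0 < m l := by simpa [hli] using hl
    exact (le_mmax hl').trans h

/-- Proposition 3.6 (b). Let `J` be Borel-fixed, `1 ≤ e ≤ n`, and
suppose `T * x_{n-1}` is a minimal generator of `J` of degree `3`, where `T` is a
degree-2 monomial with `max T ≤ e - 1`. Then for every index `i` with
`e - 1 ≤ i ≤ n - 1`, the monomial `T * x_i` belongs to `ℳ_i(3, J)`. -/
theorem stmt8 {n : ℕ} (hn : 1 ≤ n) (J : Set (Mon (n + 1)))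
    (hJ : IsMonomialIdeal J) (hB : IsBorelFixed J)
    (e : ℕ) (he1 : 1 ≤ e) (hen : e ≤ n)
    (T : Mon (n + 1)) (hT : mdeg T = 2) (hTmax : mmax T ≤ e - 1)
    (hgen : T + Pi.single (⟨n - 1, by omega⟩ : Fin (n + 1)) 1 ∈ minGens J 3) :
    ∀ i : Fin (n + 1), e - 1 ≤ (i : ℕ) → (i : ℕ) ≤ n - 1 →
      T + Pi.single i 1 ∈ Mset J 3 (i : ℕ) := by
  intro i hei hin
  obtain ⟨⟨hmem, hmin⟩, -⟩ := hgen
  have hTJ : T ∉ J := by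
    simpa using hmin ⟨n - 1, by omega⟩ (by simp)
  refine ⟨⟨hB T _ i (Fin.le_def.2 hin) hmem, fun l hl hlJ => hTJ ?_⟩,
    by rw [mdeg_add_single, hT], mmax_add_single (hTmax.trans hei)⟩
  by_cases hTl : 0 < T l
  · have hle : Pi.single l 1 ≤ T := by
      intro j
      by_cases hj : j = l
      · subst hj; simpa [Nat.one_le_iff_ne_zero, Nat.pos_iff_ne_zero] using hTl
      · simp [hj]
    have hli : l ≤ i := Fin.le_def.2 ((le_mmax hTl).trans (hTmax.trans hei))
    -- `T * x_i / x_l = (T / x_l) * x_i`, to which the Borel move from `x_i` to `x_l` applies.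
    rw [← tsub_add_eq_add_tsub hle] at hlJ
    simpa [tsub_add_cancel_of_le hle] using hB _ i l hli hlJ
  · have hli : l = i := by
      by_contra hne
      exact hTl (by simpa [hne] using hl)
    subst hli
    simpa using hlJ
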